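/- Let A be an integrally closed residuated lattice and write ~a := a\e (= e/a). Then ~(a\b) = ~b/~a and ~(b/a) = ~a\~b for all a, b ∈ A. -/

import Mathlib

/-- A residuated lattice: a lattice-ordered monoid with left and right residuals,
i.e. `b ≤ a\c ↔ a*b ≤ c ↔ a ≤ c/b`.  `ldiv a c` denotes `a\c` and `rdiv c b` denotes `c/b`. -/
class ResiduatedLattice (α : Type*) extends Lattice α, Monoid α where
  ldiv : α → α → α
  rdiv : α → α → α
  le_ldiv_iff : ∀ a b c : α, b ≤ ldiv a c ↔ a * b ≤ c
  le_rdiv_iff : ∀ a b c : α, a ≤ rdiv c b ↔ a * b ≤ c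

open ResiduatedLattice

/-!
In an integrally closed residuated pomonoid, `x * a ≤ a` means `x ≤ 1`, and `x * y ≤ 1` is symmetric
in `x` and `y`. Consequently `a \ b` and `~a * b` are interchangeable in inequalities
`_ * c ≤ 1`, although in general only `~a * b ≤ a \ b`: if `~a * b * c ≤ 1`, then `b * c * ~a ≤ 1`
by cyclicity, so `a * (a \ b) * c * ~a ≤ 1`, that is `(a \ b) * c * ~a ≤ ~a`, and `~a` cancels.
Hence `~(a \ b) = ~(~a * b)`, which is `~b / ~a` by residuation; the other identity is the mirror
image.
-/

/-- A residuated partially ordered monoid. The residuals are written with the notation of `SDiff`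
and `Div`, so `a \ c` is the left residual (the greatest `b` with `a * b ≤ c`), not a difference,
and `c / b` is the right residual. -/
class ResiduatedPomonoid (α : Type*) extends PartialOrder α, Monoid α, SDiff α, Div α where
  le_ldiv_iff {a b c : α} : b ≤ a \ c ↔ a * b ≤ c
  le_rdiv_iff {a b c : α} : a ≤ c / b ↔ a * b ≤ c

/-- The residuated pomonoid underlying a residuated lattice. It is not an instance, so that `\` and
`/` do not acquire a second meaning on lattices that already have a difference or a division. -/
abbrev ResiduatedLattice.toResiduatedPomonoid (α : Type*) [ResiduatedLattice α] :
    ResiduatedPomonoid α where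
  sdiff := ldiv
  div := rdiv
  le_ldiv_iff := le_ldiv_iff _ _ _
  le_rdiv_iff := le_rdiv_iff _ _ _

namespace ResiduatedPomonoid

section Residuals

variable {α : Type*} [ResiduatedPomonoid α] {a b c : α}

instance : MulLeftMono α where
  elim _ _ _ h := le_ldiv_iff.1 (h.trans (le_ldiv_iff.2 le_rfl))

instance : MulRightMono α where
  elim _ _ _ h := le_rdiv_iff.1 (h.trans (le_rdiv_iff.2 le_rfl))

theorem mul_ldiv_le : a * (a \ b) ≤ b :=
  le_ldiv_iff.1 le_rfl

theorem rdiv_mul_le : b / a * a ≤ b :=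
  le_rdiv_iff.1 le_rfl

theorem ldiv_mul_le_ldiv_mul : (a \ b) * c ≤ a \ (b * c) := by
  rw [le_ldiv_iff, ← mul_assoc]
  gcongr
  exact mul_ldiv_le

theorem mul_rdiv_le_mul_rdiv : c * (b / a) ≤ c * b / a := by
  rw [le_rdiv_iff, mul_assoc]
  gcongr
  exact rdiv_mul_le

end Residuals

/-- A residuated pomonoid is integrally closed if `a \ a = e = a / a` for all `a`. -/
class IntegrallyClosed (α : Type*) [ResiduatedPomonoid α] : Prop where
  ldiv_self (a : α) : a \ a = 1
  rdiv_self (a : α) : a / a = 1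

section IntegrallyClosed

open IntegrallyClosed

variable {α : Type*} [ResiduatedPomonoid α] [IntegrallyClosed α] {a b c : α}

theorem mul_le_iff_le_one_right : a * b ≤ a ↔ b ≤ 1 := by
  rw [← le_ldiv_iff, ldiv_self]

theorem mul_le_iff_le_one_left : b * a ≤ a ↔ b ≤ 1 := by
  rw [← le_rdiv_iff, rdiv_self]

theorem mul_le_one_symm (h : a * b ≤ 1) : b * a ≤ 1 :=
  mul_le_iff_le_one_left.1 <| calc
    b * a * b = b * (a * b) := mul_assoc b a b
    _ ≤ b * 1 := by gcongr
    _ = b := mul_one b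

theorem mul_le_one_comm : a * b ≤ 1 ↔ b * a ≤ 1 :=
  ⟨mul_le_one_symm, mul_le_one_symm⟩

theorem ldiv_one_eq_one_rdiv (a : α) : a \ 1 = 1 / a :=
  eq_of_forall_le_iff fun c => by rw [le_ldiv_iff, le_rdiv_iff, mul_le_one_comm]

theorem ldiv_mul_le_one_iff : (a \ b) * c ≤ 1 ↔ (a \ 1) * b * c ≤ 1 := by
  constructor <;> intro h
  · have not_mul_le : (a \ 1) * b ≤ a \ b := by
      simpa only [one_mul] using ldiv_mul_le_ldiv_mul (a := a) (b := 1) (c := b)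
    exact le_trans (by gcongr) h
  · have cancel : (a \ b) * c * (a \ 1) ≤ a \ 1 := le_ldiv_iff.2 <| calc
      a * ((a \ b) * c * (a \ 1)) = a * (a \ b) * (c * (a \ 1)) := by simp only [mul_assoc]
      _ ≤ b * (c * (a \ 1)) := by gcongr; exact mul_ldiv_le
      _ = b * c * (a \ 1) := (mul_assoc ..).symm
      _ ≤ 1 := mul_le_one_symm (by rwa [← mul_assoc])
    exact mul_le_iff_le_one_left.1 cancel

theorem mul_rdiv_le_one_iff : c * (b / a) ≤ 1 ↔ c * (b * (1 / a)) ≤ 1 := by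
  constructor <;> intro h
  · have mul_not_le : b * (1 / a) ≤ b / a := by
      simpa only [mul_one] using mul_rdiv_le_mul_rdiv (a := a) (b := 1) (c := b)
    exact le_trans (by gcongr) h
  · have cancel : 1 / a * (c * (b / a)) ≤ 1 / a := le_rdiv_iff.2 <| calc
      1 / a * (c * (b / a)) * a = 1 / a * c * (b / a * a) := by simp only [mul_assoc]
      _ ≤ 1 / a * c * b := by gcongr; exact rdiv_mul_le
      _ = 1 / a * (c * b) := mul_assoc ..
      _ ≤ 1 := mul_le_one_symm (by rwa [mul_assoc])
    exact mul_le_iff_le_one_right.1 cancel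

theorem ldiv_ldiv_one (a b : α) : (a \ b) \ 1 = (b \ 1) / (a \ 1) :=
  eq_of_forall_le_iff fun c => calc
    c ≤ (a \ b) \ 1 ↔ (a \ b) * c ≤ 1 := le_ldiv_iff
    _ ↔ (a \ 1) * b * c ≤ 1 := ldiv_mul_le_one_iff
    _ ↔ b * c * (a \ 1) ≤ 1 := by rw [mul_assoc, mul_le_one_comm]
    _ ↔ c ≤ (b \ 1) / (a \ 1) := by rw [le_rdiv_iff, le_ldiv_iff, mul_assoc]

theorem rdiv_ldiv_one (a b : α) : (b / a) \ 1 = (a \ 1) \ (b \ 1) :=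
  eq_of_forall_le_iff fun c => calc
    c ≤ (b / a) \ 1 ↔ c * (b / a) ≤ 1 := by rw [le_ldiv_iff, mul_le_one_comm]
    _ ↔ c * (b * (1 / a)) ≤ 1 := mul_rdiv_le_one_iff
    _ ↔ b * (a \ 1) * c ≤ 1 := by rw [mul_le_one_comm, ldiv_one_eq_one_rdiv]
    _ ↔ c ≤ (a \ 1) \ (b \ 1) := by rw [le_ldiv_iff, le_ldiv_iff, mul_assoc]

end IntegrallyClosed

end ResiduatedPomonoid

theorem not_ldiv_eq_and_not_rdiv_eq_general {α : Type*} [ResiduatedPomonoid α]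
    [ResiduatedPomonoid.IntegrallyClosed α] (a b : α) :
    (a \ b) \ 1 = (b \ 1) / (a \ 1) ∧ (b / a) \ 1 = (a \ 1) \ (b \ 1) :=
  ⟨ResiduatedPomonoid.ldiv_ldiv_one a b, ResiduatedPomonoid.rdiv_ldiv_one a b⟩

/-- In any integrally closed residuated lattice, `~(a\b) = ~b/~a` and
`~(b/a) = ~a\~b`, where `~a := a\e = e/a`. -/
theorem not_ldiv_eq_and_not_rdiv_eq {α : Type*} [ResiduatedLattice α]
    (hic : ∀ a : α, ldiv a a = 1 ∧ rdiv a a = 1) :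
    ∀ a b : α, ldiv (ldiv a b) 1 = rdiv (ldiv b 1) (ldiv a 1) ∧
      ldiv (rdiv b a) 1 = ldiv (ldiv a 1) (ldiv b 1) :=
  letI := ResiduatedLattice.toResiduatedPomonoid α
  haveI : ResiduatedPomonoid.IntegrallyClosed α := ⟨fun a => (hic a).1, fun a => (hic a).2⟩
  not_ldiv_eq_and_not_rdiv_eq_general
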